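/- Let G and W be groups acting on a set X with commuting actions (g • (w • x) = w • (g • x) for all g ∈ G, w ∈ W, x ∈ X). Let Ψ ∈ X be a point whose stabilizer in G is trivial, and let N = {w ∈ W : w • Ψ = Ψ} be the stabilizer of Ψ in W. Let (g_i)_{i∈I} be a family of elements of G and (ν_i)_{i∈I} a family of elements of W such that ν_i • Ψ = g_i • Ψ for every i ∈ I. Then for every finite signed word ((i_1,ε_1),…,(i_k,ε_k)) with indices i_j ∈ I and exponents ε_j ∈ {1,−1}, the product g_{i_1}^{ε_1} g_{i_2}^{ε_2} ⋯ g_{i_k}^{ε_k} equals the identity of G if and only if the reversed product ν_{i_k}^{ε_k} ⋯ ν_{i_2}^{ε_2} ν_{i_1}^{ε_1} lies in N. (Theorem 4: words w in the generators ρ_i of Aut(R) satisfy w = 1 in Aut(R) exactly when their image wψ stabilizes the base flag.) -/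

import Mathlib

/-!
Suppose `ν` and `ν'` in `W` move `Ψ` to the same points as `g` and `g'` in `G`, respectively. Since
the actions commute, `(ν' * ν) • Ψ = ν' • g • Ψ = g • ν' • Ψ = (g * g') • Ψ`, and likewise `ν⁻¹` and
`g⁻¹` move `Ψ` to the same point. So a signed word in the `g i` and the reversed word in the `ν i`
move `Ψ` to the same point, and one fixes `Ψ` exactly when the other does.
-/

/-- The product `g_{i₁}^{ε₁} g_{i₂}^{ε₂} ⋯ g_{i_k}^{ε_k}` associated to a finite signed
word `((i₁,ε₁),…,(i_k,ε_k))`, where the Boolean `true` stands for exponent `1` and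
`false` for exponent `-1`. -/
def signedProd {G : Type*} [Group G] {I : Type*} (g : I → G) (w : List (I × Bool)) : G :=
  (w.map (fun p => if p.2 then g p.1 else (g p.1)⁻¹)).prod

section CommutingActions

variable {X : Type*}

lemma mul_swap_smul_eq_mul_smul {M N : Type*} [Monoid M] [Monoid N] [MulAction M X] [MulAction N X]
    [SMulCommClass M N X] {x : X} {m m' : M} {n n' : N}
    (h : n • x = m • x) (h' : n' • x = m' • x) : (n' * n) • x = (m * m') • x :=
  calc
    (n' * n) • x = n' • m • x := by rw [mul_smul, h]
    _ = m • n' • x := (smul_comm m n' x).symm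
    _ = (m * m') • x := by rw [h', mul_smul]

lemma prod_map_reverse_smul_eq_prod_map_smul {M N ι : Type*} [Monoid M] [Monoid N] [MulAction M X]
    [MulAction N X] [SMulCommClass M N X] {x : X} {a : ι → M} {b : ι → N} (l : List ι)
    (h : ∀ i ∈ l, b i • x = a i • x) : (l.reverse.map b).prod • x = (l.map a).prod • x := by
  induction l with
  | nil => simp only [List.reverse_nil, List.map_nil, List.prod_nil, one_smul]
  | cons i l ih =>
    obtain ⟨head, tail⟩ := List.forall_mem_cons.mp h
    simp only [List.reverse_cons, List.map_append, List.map_cons, List.map_nil, List.prod_append,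
      List.prod_cons, List.prod_nil, mul_one]
    exact mul_swap_smul_eq_mul_smul head (ih tail)

variable {G W : Type*} [Group G] [Group W] [MulAction G X] [MulAction W X] [SMulCommClass G W X]

lemma inv_smul_eq_inv_smul_of_smul_eq_smul {x : X} {g : G} {w : W} (h : w • x = g • x) :
    w⁻¹ • x = g⁻¹ • x := by
  rw [inv_smul_eq_iff, ← smul_comm, h, inv_smul_smul]

lemma signedProd_reverse_smul {I : Type*} {x : X} {g : I → G} {ν : I → W}
    (hν : ∀ i, ν i • x = g i • x) (word : List (I × Bool)) :
    signedProd ν word.reverse • x = signedProd g word • x := by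
  refine prod_map_reverse_smul_eq_prod_map_smul word ?_
  rintro ⟨i, _ | _⟩ -
  · exact inv_smul_eq_inv_smul_of_smul_eq_smul (hν i)
  · exact hν i

theorem signedWord_eq_one_iff_reversed_mem_stabilizer_general {I : Type*} {x : X} {g : I → G}
    {ν : I → W} (hν : ∀ i, ν i • x = g i • x) (word : List (I × Bool)) :
    signedProd g word ∈ MulAction.stabilizer G x ↔
      signedProd ν word.reverse ∈ MulAction.stabilizer W x := by
  rw [MulAction.mem_stabilizer_iff, MulAction.mem_stabilizer_iff, signedProd_reverse_smul hν]

end CommutingActions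

/-- Theorem 4: with commuting actions of `G` and `W` on `X`, a base point
`Ψ` with trivial `G`-stabilizer, `N` the `W`-stabilizer of `Ψ`, and families `(g_i)`,
`(ν_i)` with `ν_i • Ψ = g_i • Ψ`, a signed word in the `g_i` equals `1` in `G` if and
only if the reversed signed word in the `ν_i` lies in `N`. -/
theorem signedWord_eq_one_iff_reversed_mem_stabilizer
    {G W X : Type*} [Group G] [Group W] [MulAction G X] [MulAction W X]
    (hcomm : ∀ (g : G) (w : W) (x : X), g • (w • x) = w • (g • x))
    (Ψ : X) (htriv : ∀ g : G, g • Ψ = Ψ → g = 1)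
    {I : Type*} (g : I → G) (ν : I → W) (hν : ∀ i : I, ν i • Ψ = g i • Ψ)
    (word : List (I × Bool)) :
    signedProd g word = 1 ↔ signedProd ν word.reverse ∈ MulAction.stabilizer W Ψ := by
  have : SMulCommClass G W X := ⟨hcomm⟩
  have eq_one_iff (a : G) : a = 1 ↔ a ∈ MulAction.stabilizer G Ψ :=
    ⟨fun h => h ▸ one_mem _, htriv a⟩
  rw [eq_one_iff, signedWord_eq_one_iff_reversed_mem_stabilizer_general hν]
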